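/- arXiv:1612.03600 — 5 statements merged into one kernel-verified Lean document; each statement's English description precedes it below -/
import Mathlib

section
/- For every quaternion q, the function f : ℍ → ℝ given by f(p) = -(1/4)·‖p‖⁴ is Fréchet differentiable at q, and its derivative is the linear functional v ↦ ψ₀(i·q, j·q, k·q, v), which moreover equals v ↦ -‖q‖²·⟪q, v⟫. (This expresses that σ(q) = -(1/4)‖q‖⁴ + C is a tri-moment map for the multiplicative Sp(1)-action on (ℍ, ψ₀), since i·q, j·q, k·q are the fundamental vector fields at q of the standard basis H, X, Y of 𝔰𝔭(1).) -/
/-!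
The chain rule applied to `-(1/4) (‖p‖²)²` gives the derivative `v ↦ -‖q‖² ⟪q, v⟫`, since
`‖p‖²` has derivative `2 ⟪q, ·⟫`. Left multiplication by `i`, `j`, `k` takes `q` to three
mutually orthogonal vectors of norm `‖q‖`, all orthogonal to `q`. Hence `ψ₀(i q, j q, k q, v)`
is a multiple of `⟪q, v⟫`, and taking `v = q` shows that the factor is `-‖q‖²`, the sign being that
of the odd permutation `(i, j, k, 1)` of the basis `(1, i, j, k)`. In coordinates this is a
polynomial identity, verified by expanding the determinant.
-/

open scoped RealInnerProductSpace

/-- The standard 4-plectic form on `ℍ ≅ ℝ⁴`: the determinant of the matrix of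
coordinates of the four quaternions with respect to the real basis `(1, i, j, k)`. -/
noncomputable def psi0 (a b c d : Quaternion ℝ) : ℝ :=
  Matrix.det !![a.re, b.re, c.re, d.re;
                a.imI, b.imI, c.imI, d.imI;
                a.imJ, b.imJ, c.imJ, d.imJ;
                a.imK, b.imK, c.imK, d.imK]

/-- The quaternion imaginary unit `i`. -/
def qI : Quaternion ℝ := ⟨0, 1, 0, 0⟩
/-- The quaternion imaginary unit `j`. -/
def qJ : Quaternion ℝ := ⟨0, 0, 1, 0⟩
/-- The quaternion imaginary unit `k`. -/
def qK : Quaternion ℝ := ⟨0, 0, 0, 1⟩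

/-- `σ(q) = -(1/4)‖q‖⁴` is differentiable at every `q`, with derivative the linear
functional `v ↦ ψ₀(i·q, j·q, k·q, v)`, which equals `v ↦ -‖q‖²⟪q, v⟫`. -/
theorem stmt_0 (q : Quaternion ℝ) :
    ∃ L : Quaternion ℝ →L[ℝ] ℝ,
      HasFDerivAt (fun p : Quaternion ℝ => -(1 / 4 : ℝ) * ‖p‖ ^ 4) L q ∧
      (∀ v : Quaternion ℝ, L v = psi0 (qI * q) (qJ * q) (qK * q) v) ∧
      (∀ v : Quaternion ℝ, L v = -‖q‖ ^ 2 * ⟪q, v⟫) := by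
  have hn : HasFDerivAt (fun p : Quaternion ℝ => ‖p‖ ^ 2) ((2 : ℕ) • innerSL ℝ q) q :=
    (hasStrictFDerivAt_norm_sq q).hasFDerivAt
  have hd : HasFDerivAt (fun p : Quaternion ℝ => -(1 / 4 : ℝ) * ‖p‖ ^ 4)
      ((-‖q‖ ^ 2) • innerSL ℝ q) q := by
    -- Differentiating `(‖p‖²)²` avoids the norm itself, which is not differentiable at `0`.
    have h := (hn.pow 2).const_mul (-(1 / 4 : ℝ))
    have hf : (fun p : Quaternion ℝ => -(1 / 4 : ℝ) * ‖p‖ ^ 4)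
        = fun p => -(1 / 4 : ℝ) * (‖p‖ ^ 2) ^ 2 := by
      funext p
      ring
    rw [hf]
    refine h.congr_fderiv ?_
    ext v
    simp
    ring
  refine ⟨_, hd, fun v => ?_, fun v => by simp⟩
  have hsq : ‖q‖ ^ 2 = q.re ^ 2 + q.imI ^ 2 + q.imJ ^ 2 + q.imK ^ 2 := by
    rw [sq, ← Quaternion.normSq_eq_norm_mul_self, Quaternion.normSq_def']
  have hin : ⟪q, v⟫ = q.re * v.re + q.imI * v.imI + q.imJ * v.imJ + q.imK * v.imK := by
    rw [Quaternion.inner_def]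
    simp
  have hI : qI * q = ⟨-q.imI, q.re, -q.imK, q.imJ⟩ := by
    ext <;> simp [Quaternion.re_mul, Quaternion.imI_mul, Quaternion.imJ_mul,
      Quaternion.imK_mul] <;> simp [qI]
  have hJ : qJ * q = ⟨-q.imJ, q.imK, q.re, -q.imI⟩ := by
    ext <;> simp [Quaternion.re_mul, Quaternion.imI_mul, Quaternion.imJ_mul,
      Quaternion.imK_mul] <;> simp [qJ]
  have hK : qK * q = ⟨-q.imK, -q.imJ, q.imI, q.re⟩ := by
    ext <;> simp [Quaternion.re_mul, Quaternion.imI_mul, Quaternion.imJ_mul,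
      Quaternion.imK_mul] <;> simp [qK]
  simp only [FunLike.coe_smul, Pi.smul_apply, innerSL_apply_apply, smul_eq_mul, hsq, hin]
  rw [hI, hJ, hK]
  simp [psi0, Matrix.det_succ_row_zero, Fin.sum_univ_succ, Fin.succAbove]
  ring
end

section
/- The level set Z is compact: if the polyhedron P = {x ∈ ℝᵐ | ⟨x, vℓ⟩ ≤ λℓ for all ℓ = 1,…,d} is bounded, then the set Z = {q ∈ ℍᵈ | there exists x ∈ ℝᵐ with -(1/4)‖qℓ‖⁴ + λℓ = ⟨x, vℓ⟩ for all ℓ} is a compact subset of ℍᵈ. -/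
/-!
If `x` witnesses that `q` lies in `Z`, then `lam ℓ - ⟪x, v ℓ⟫ = ‖q ℓ‖ ^ 4 / 4 ≥ 0`, so `x` lies in
the bounded polyhedron `P`; this in turn bounds every `‖q ℓ‖`. Hence the closed set of pairs
`(q, x)` cut out by the defining equations is contained in a product of closed balls of a
finite-dimensional space, so it is compact, and `Z` is its image under the first projection.
-/

open scoped RealInnerProductSpace

/-- If the polyhedron `P = {x ∈ ℝᵐ | ⟨x, vℓ⟩ ≤ λℓ}` is bounded, then the level set
`Z = {q ∈ ℍᵈ | σ(q) ∈ range π*}` of the tri-moment map `σ(q)ℓ = -(1/4)‖qℓ‖⁴ + λℓ`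
is compact. -/
theorem stmt_2 (m d : ℕ) (v : Fin d → EuclideanSpace ℝ (Fin m)) (lam : Fin d → ℝ)
    (hP : Bornology.IsBounded {x : EuclideanSpace ℝ (Fin m) | ∀ ℓ, ⟪x, v ℓ⟫ ≤ lam ℓ}) :
    IsCompact {q : Fin d → Quaternion ℝ |
      ∃ x : EuclideanSpace ℝ (Fin m),
        ∀ ℓ, -(1 / 4 : ℝ) * ‖q ℓ‖ ^ 4 + lam ℓ = ⟪x, v ℓ⟫} := by
  obtain ⟨R, hR⟩ := hP.subset_closedBall 0
  have : ProperSpace (Quaternion ℝ) := FiniteDimensional.proper ℝ _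
  set S : Set ((Fin d → Quaternion ℝ) × EuclideanSpace ℝ (Fin m)) :=
    {p | ∀ ℓ, -(1 / 4 : ℝ) * ‖p.1 ℓ‖ ^ 4 + lam ℓ = ⟪p.2, v ℓ⟫} with hS
  have hclosed : IsClosed S := by
    rw [hS, Set.setOf_forall]
    exact isClosed_iInter fun ℓ => isClosed_eq (by fun_prop) (by fun_prop)
  have hK : IsCompact ((Set.univ.pi fun ℓ => Metric.closedBall (0 : Quaternion ℝ)
      (1 + 4 * (lam ℓ + R * ‖v ℓ‖))) ×ˢ
      Metric.closedBall (0 : EuclideanSpace ℝ (Fin m)) R) :=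
    (isCompact_univ_pi fun ℓ => isCompact_closedBall _ _).prod (isCompact_closedBall _ _)
  have hcompact : IsCompact S := by
    refine hK.of_isClosed_subset hclosed ?_
    rintro ⟨q, x⟩ h
    have hx : x ∈ Metric.closedBall (0 : EuclideanSpace ℝ (Fin m)) R := by
      refine hR fun ℓ => ?_
      have h1 : -(1 / 4 : ℝ) * ‖q ℓ‖ ^ 4 + lam ℓ = ⟪x, v ℓ⟫ := h ℓ
      have h2 : 0 ≤ ‖q ℓ‖ ^ 4 := by positivity
      linarith
    refine ⟨fun ℓ _ => ?_, hx⟩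
    rw [mem_closedBall_zero_iff] at hx ⊢
    have h1 : -(1 / 4 : ℝ) * ‖q ℓ‖ ^ 4 + lam ℓ = ⟪x, v ℓ⟫ := h ℓ
    have h2 : -(R * ‖v ℓ‖) ≤ ⟪x, v ℓ⟫ := by
      have h3 := (abs_le.mp (abs_real_inner_le_norm x (v ℓ))).1
      have h4 : ‖x‖ * ‖v ℓ‖ ≤ R * ‖v ℓ‖ := by gcongr
      linarith
    -- `t ≤ 1 + t ^ 4` turns the bound on the fourth power into one on the norm.
    have h5 : ‖q ℓ‖ ≤ 1 + ‖q ℓ‖ ^ 4 := by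
      nlinarith [sq_nonneg (‖q ℓ‖ ^ 2 - 1 / 2), sq_nonneg (‖q ℓ‖ - 1 / 2)]
    linarith
  convert hcompact.image continuous_fst using 1
  ext q
  simp [hS]
end

section
/- Horizontality of ψ₀ along spheres: for every q ∈ ℍ, every quaternion u with zero real part, and all quaternions v₁, v₂, v₃ each orthogonal to q (i.e. ⟪q, vᵢ⟫ = 0 for i = 1,2,3), one has ψ₀(u·q, v₁, v₂, v₃) = 0. (This is the claim that the contraction of ψ₀ along any fundamental vector field of the multiplicative Sp(1)-action vanishes when restricted to a sphere {‖q‖ = c}.) -/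
/-!
If `q = 0`, the first argument `u * q` of the determinant vanishes. Otherwise `u * q` is itself
orthogonal to `q`, because `⟪q, u * q⟫ = re u * ‖q‖²` and `re u = 0`. So all four columns of the
matrix are orthogonal to `q`: the coordinate vector of `q` is a nonzero element of the left kernel,
and the determinant is zero.
-/

open scoped RealInnerProductSpace

theorem quaternion_inner_eq_coords (p q : Quaternion ℝ) :
    ⟪p, q⟫ = p.re * q.re + p.imI * q.imI + p.imJ * q.imJ + p.imK * q.imK := by
  rw [Quaternion.inner_def]
  simp

/-- Multiplication on the left by an imaginary quaternion is skew-symmetric, so the fundamental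
vector field `u * q` is tangent to the sphere through `q`. -/
theorem inner_mul_self_eq_zero_of_re_eq_zero (q u : Quaternion ℝ) (hu : u.re = 0) :
    ⟪q, u * q⟫ = 0 := by
  rw [quaternion_inner_eq_coords]
  simp [hu]
  ring

theorem psi0_eq_zero_of_orthogonal {q a b c d : Quaternion ℝ} (hq : q ≠ 0)
    (ha : ⟪q, a⟫ = 0) (hb : ⟪q, b⟫ = 0) (hc : ⟪q, c⟫ = 0) (hd : ⟪q, d⟫ = 0) :
    psi0 a b c d = 0 := by
  rw [quaternion_inner_eq_coords] at ha hb hc hd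
  refine Matrix.exists_vecMul_eq_zero_iff.mp ⟨![q.re, q.imI, q.imJ, q.imK], fun h => hq ?_, ?_⟩
  · ext
    · exact congrFun h 0
    · exact congrFun h 1
    · exact congrFun h 2
    · exact congrFun h 3
  · ext i
    fin_cases i <;> simp [Matrix.vecMul, dotProduct, Fin.sum_univ_four] <;> assumption

/-- Horizontality of `ψ₀` along spheres: for any purely imaginary `u` and any
`v₁, v₂, v₃` orthogonal to `q`, the contraction `ψ₀(u·q, v₁, v₂, v₃)` vanishes. -/
theorem stmt_5 (q u v₁ v₂ v₃ : Quaternion ℝ) (hu : u.re = 0)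
    (h1 : ⟪q, v₁⟫ = 0) (h2 : ⟪q, v₂⟫ = 0) (h3 : ⟪q, v₃⟫ = 0) :
    psi0 (u * q) v₁ v₂ v₃ = 0 := by
  by_cases hq : q = 0
  · subst hq
    exact Matrix.det_eq_zero_of_column_eq_zero 0 fun i => by fin_cases i <;> simp <;> rfl
  · exact psi0_eq_zero_of_orthogonal hq (inner_mul_self_eq_zero_of_re_eq_zero q u hu) h1 h2 h3
end

section
/- The image of the tri-moment map of ℍℙᵐ is the standard m-simplex: for m ≥ 1, the set {x ∈ ℝᵐ | there exists a nonzero q : Fin (m+1) → ℍ with x i = ‖q i‖⁴ / (∑ⱼ ‖q j‖⁴) for all i = 1,…,m} equals {x ∈ ℝᵐ | x i ≥ 0 for all i and ∑ᵢ x i ≤ 1}, which is the convex hull of the m+1 points 0, e₁, …, eₘ (the images of the fixed points of the Sp(1)ᵐ-action). (The tri-moment map of the paper is the negative of this map.) -/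
/-!
A point `x` of the solid simplex `{x | 0 ≤ x, ∑ i, x i ≤ 1}` has barycentric coordinates
`w = (x₁, …, xₘ, 1 - ∑ i, x i)`, which are nonnegative with sum `1`.

The moment map normalizes the nonnegative vector `(‖q j‖ ^ 4)ⱼ` to total mass `1` and drops the
last coordinate, so its values lie in the simplex. Conversely `x` is the value at the real vector
`q j = w j ^ (1 / 4)`, for which the normalizing sum equals `1`.

For the convex hull, `x = ∑ j, w j • vⱼ` where `v = (e₁, …, eₘ, 0)`, and the simplex is convex and
contains all the `vⱼ`.
-/

/-- The barycentric coordinates of `x` with respect to `e₁, …, eₘ, 0`, in this order. -/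
def barycentric {m : ℕ} (x : Fin m → ℝ) : Fin (m + 1) → ℝ :=
  Fin.snoc x (1 - ∑ i, x i)

@[simp]
lemma barycentric_castSucc {m : ℕ} (x : Fin m → ℝ) (i : Fin m) :
    barycentric x i.castSucc = x i := by
  simp [barycentric]

@[simp]
lemma barycentric_last {m : ℕ} (x : Fin m → ℝ) :
    barycentric x (Fin.last m) = 1 - ∑ i, x i := by
  simp [barycentric]

lemma sum_barycentric {m : ℕ} (x : Fin m → ℝ) : ∑ j, barycentric x j = 1 := by
  simp [Fin.sum_univ_castSucc]

lemma barycentric_nonneg {m : ℕ} {x : Fin m → ℝ} (h0 : ∀ i, 0 ≤ x i) (h1 : ∑ i, x i ≤ 1)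
    (j : Fin (m + 1)) : 0 ≤ barycentric x j := by
  refine Fin.lastCases ?_ (fun i => ?_) j
  · simpa using h1
  · simpa using h0 i

lemma moment_mem_simplex {m : ℕ} (q : Fin (m + 1) → Quaternion ℝ) (hq : q ≠ 0)
    {x : Fin m → ℝ} (hx : ∀ i : Fin m, x i = ‖q i.castSucc‖ ^ 4 / ∑ j, ‖q j‖ ^ 4) :
    (∀ i, 0 ≤ x i) ∧ ∑ i, x i ≤ 1 := by
  have hpos : 0 < ∑ j, ‖q j‖ ^ 4 := by
    obtain ⟨k, hk⟩ := Function.ne_iff.mp hq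
    exact Finset.sum_pos' (fun j _ => by positivity)
      ⟨k, Finset.mem_univ k, pow_pos (norm_pos_iff.mpr hk) 4⟩
  refine ⟨fun i => by rw [hx i]; positivity, ?_⟩
  simp_rw [hx]
  rw [← Finset.sum_div, div_le_one hpos, Fin.sum_univ_castSucc (fun j => ‖q j‖ ^ 4)]
  exact le_add_of_nonneg_right (by positivity)

lemma exists_moment_eq {m : ℕ} {x : Fin m → ℝ} (h0 : ∀ i, 0 ≤ x i) (h1 : ∑ i, x i ≤ 1) :
    ∃ q : Fin (m + 1) → Quaternion ℝ, q ≠ 0 ∧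
      ∀ i : Fin m, x i = ‖q i.castSucc‖ ^ 4 / ∑ j, ‖q j‖ ^ 4 := by
  let q : Fin (m + 1) → Quaternion ℝ := fun j => ((√√(barycentric x j) : ℝ) : Quaternion ℝ)
  have hq (j) : ‖q j‖ ^ 4 = barycentric x j := by
    have hn : ‖q j‖ = √√(barycentric x j) := by
      rw [Quaternion.norm_coe, Real.norm_of_nonneg (Real.sqrt_nonneg _)]
    rw [hn, show 4 = 2 * 2 from rfl, pow_mul, Real.sq_sqrt (Real.sqrt_nonneg _),
      Real.sq_sqrt (barycentric_nonneg h0 h1 j)]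
  have hsum : ∑ j, ‖q j‖ ^ 4 = 1 := by simp_rw [hq, sum_barycentric]
  refine ⟨q, fun h => ?_, fun i => ?_⟩
  · simp [h] at hsum
  · rw [hsum, hq, barycentric_castSucc, div_one]

lemma mem_convexHull_of_mem_simplex {m : ℕ} {x : Fin m → ℝ} (h0 : ∀ i, 0 ≤ x i)
    (h1 : ∑ i, x i ≤ 1) :
    x ∈ convexHull ℝ
      (insert (0 : Fin m → ℝ) (Set.range fun i : Fin m => Pi.single i (1 : ℝ))) := by
  let v : Fin (m + 1) → Fin m → ℝ := Fin.snoc (fun i => Pi.single i (1 : ℝ)) 0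
  have hv (j) : v j ∈ convexHull ℝ
      (insert (0 : Fin m → ℝ) (Set.range fun i : Fin m => Pi.single i (1 : ℝ))) := by
    apply subset_convexHull
    refine Fin.lastCases ?_ (fun i => ?_) j
    · simp [v]
    · exact Or.inr ⟨i, by simp [v]⟩
  have hx : ∑ j, barycentric x j • v j = x := by
    simpa [Fin.sum_univ_castSucc, v] using (pi_eq_sum_univ' x).symm
  rw [← hx]
  exact (convex_convexHull ℝ _).sum_mem (fun j _ => barycentric_nonneg h0 h1 j)
    (sum_barycentric x) (fun j _ => hv j)

lemma convex_simplex (m : ℕ) : Convex ℝ {x : Fin m → ℝ | (∀ i, 0 ≤ x i) ∧ ∑ i, x i ≤ 1} := by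
  rintro x ⟨hx0, hx1⟩ y ⟨hy0, hy1⟩ a b ha hb hab
  refine ⟨fun i => ?_, ?_⟩
  · exact add_nonneg (mul_nonneg ha (hx0 i)) (mul_nonneg hb (hy0 i))
  · simp only [Pi.add_apply, Pi.smul_apply, smul_eq_mul, Finset.sum_add_distrib,
      ← Finset.mul_sum]
    nlinarith

/-- The image of (the negative of) the tri-moment map of `ℍℙᵐ` is the standard
`m`-simplex, which is the convex hull of the `m+1` points `0, e₁, …, eₘ` (the images
of the fixed points of the `Sp(1)ᵐ`-action). -/
theorem stmt_13 (m : ℕ) (hm : 1 ≤ m) :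
    {x : Fin m → ℝ | ∃ q : Fin (m + 1) → Quaternion ℝ, q ≠ 0 ∧
        ∀ i : Fin m, x i = ‖q i.castSucc‖ ^ 4 / ∑ j, ‖q j‖ ^ 4} =
      {x : Fin m → ℝ | (∀ i, 0 ≤ x i) ∧ ∑ i, x i ≤ 1} ∧
    {x : Fin m → ℝ | (∀ i, 0 ≤ x i) ∧ ∑ i, x i ≤ 1} =
      convexHull ℝ
        (insert (0 : Fin m → ℝ) (Set.range fun i : Fin m => Pi.single i (1 : ℝ))) := by
  refine ⟨Set.ext fun x => ⟨?_, fun h => exists_moment_eq h.1 h.2⟩, Set.Subset.antisymm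
    (fun x h => mem_convexHull_of_mem_simplex h.1 h.2) (convexHull_min ?_ (convex_simplex m))⟩
  · rintro ⟨q, hq, hx⟩
    exact moment_mem_simplex q hq hx
  · rintro _ (rfl | ⟨i, rfl⟩)
    · simp
    · have hi : (0 : Fin m → ℝ) ≤ Pi.single i 1 := Pi.single_nonneg.mpr zero_le_one
      exact ⟨fun j => hi j, by simp⟩
end

section
/- For every real number l with |l| > 1, the 2-dimensional subspace of ℝ⁴ spanned by (1,0,1,0) and (1,l,0,1) admits no basis consisting of vectors all of whose coordinates lie in {-1, 0, 1}: any two vectors of this subspace with all coordinates in {-1,0,1} are linearly dependent. (Hence the Lie algebra 𝔫 in Remark 4.8 admits no reduced basis and the torus action cannot be extended to Sp(1)² when l > 1.) -/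
/-- A vector `a (1,0,1,0) + b (1,l,0,1)` has second coordinate `b l` and fourth coordinate `b`.
If both lie in `{-1,0,1}` and `|l| > 1`, then `b = 0`, so only multiples of `(1,0,1,0)` remain.
In particular any two such vectors are dependent. -/
theorem exists_eq_smul_of_mem_span (l : ℝ) (hl : 1 < |l|) (u : Fin 4 → ℝ)
    (hu : u ∈ Submodule.span ℝ ({![1, 0, 1, 0], ![1, l, 0, 1]} : Set (Fin 4 → ℝ)))
    (hu' : ∀ i, u i ∈ ({-1, 0, 1} : Set ℝ)) :
    ∃ a : ℝ, u = a • ![1, 0, 1, 0] := by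
  obtain ⟨a, b, rfl⟩ := Submodule.mem_span_pair.mp hu
  have h1 : b * l = -1 ∨ b * l = 0 ∨ b * l = 1 := by simpa using hu' 1
  have h3 : b = -1 ∨ b = 0 ∨ b = 1 := by simpa using hu' 3
  have hb : b = 0 := by
    by_contra hb
    have hb1 : |b| = 1 := by
      rcases h3 with h | h | h
      · simp [h]
      · exact absurd h hb
      · simp [h]
    have hbl : |b * l| ≤ 1 := by
      rcases h1 with h | h | h <;> simp [h]
    rw [abs_mul, hb1, one_mul] at hbl
    linarith
  exact ⟨a, by simp [hb]⟩

/-- For `|l| > 1`, the plane in `ℝ⁴` spanned by `(1,0,1,0)` and `(1,l,0,1)` admits no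
basis of vectors with all coordinates in `{-1,0,1}`: any two such vectors of the plane
are linearly dependent. Hence the Lie algebra `𝔫` of Remark 4.8 has no reduced basis. -/
theorem stmt_15 (l : ℝ) (hl : 1 < |l|) (u w : Fin 4 → ℝ)
    (hu : u ∈ Submodule.span ℝ ({![1, 0, 1, 0], ![1, l, 0, 1]} : Set (Fin 4 → ℝ)))
    (hw : w ∈ Submodule.span ℝ ({![1, 0, 1, 0], ![1, l, 0, 1]} : Set (Fin 4 → ℝ)))
    (hu' : ∀ i, u i ∈ ({-1, 0, 1} : Set ℝ)) (hw' : ∀ i, w i ∈ ({-1, 0, 1} : Set ℝ)) :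
    ¬ LinearIndependent ℝ ![u, w] := by
  obtain ⟨a, rfl⟩ := exists_eq_smul_of_mem_span l hl u hu hu'
  obtain ⟨c, rfl⟩ := exists_eq_smul_of_mem_span l hl w hw hw'
  intro h
  rw [LinearIndependent.pair_iff] at h
  -- The relation `c u - a w = 0` forces `a = 0`, so `u = 0`, which is itself a dependence.
  have ha : a = 0 := by
    have := (h c (-a) (by module)).2
    linarith
  exact one_ne_zero (h 1 0 (by simp [ha])).1
end
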